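/- Let α > −1 be real and N ≥ 1. For tuples x = (x_1,…,x_N) and y = (y_1,…,y_N), each of pairwise distinct positive reals, define q(x,y) := det_{1≤i,j≤N}[ (y_j^{α+1} / x_i^α) · e^{−(x_i² + y_j²)/2} · I_α(x_i y_j) ]. Then, as (x, y) tends to ((0,…,0), (0,…,0)) through such tuples, the ratio q(x,y) / ( (∏_{k=1}^N y_k^{2α+1}) · Δ(x²) · Δ(y²) ) converges to 2^{−N(N−1+α)} / ∏_{k=1}^N ( Γ(k) · Γ(α+k) ). -/

import Mathlib

open Filter

/-- The modified Bessel function of the first kind, for `x > 0`,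
`I_α(x) = Σ_{k=0}^∞ (x/2)^{2k+α} / (k! Γ(k+α+1))`. -/
noncomputable def besselI (α x : ℝ) : ℝ :=
  ∑' k : ℕ, (x / 2) ^ (2 * (k : ℝ) + α) / ((Nat.factorial k : ℝ) * Real.Gamma ((k : ℝ) + α + 1))

/-- The Vandermonde product `Δ(x) = ∏_{1 ≤ j < k ≤ N} (x_k - x_j)`. -/
def vandermondeProd {N : ℕ} (x : Fin N → ℝ) : ℝ :=
  ∏ p ∈ Finset.univ.filter (fun p : Fin N × Fin N => p.1 < p.2), (x p.2 - x p.1)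

/-!
Put `f z = ∑ k, c k * z ^ k`. In the basis of Newton polynomials `∏ l < m, (X - u l)` the values of
`X ^ k` at the nodes `u` have coefficients which depend polynomially on `u` and degenerate to the
Kronecker delta of `m` and `k` at `u = 0`. Expanding both variables in this way factors
`[f (u i * v j)]` as `L u * D u v * (L v)ᵀ`, where `L` is lower triangular with determinant the
Vandermonde determinant, and where `D u v → diagonal c` by dominated convergence. Hence
`det [f (u i * v j)] / (Δ u * Δ v) → ∏ k < N, c k` as the nodes collapse to `0`.

For the Bessel kernel, `I_α z = (z / 2) ^ α * f (z ^ 2)` with `f` entire, and the remaining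
factors split into one depending on `x i` and one depending on `y j`.
-/

open Matrix Polynomial Topology

section NewtonInterpolation

variable {R : Type*} [CommRing R] {n : ℕ}

/-- The matrix `∏ l < m, (u i - u l)` of values of the `m`-th Newton polynomial at the `i`-th node,
a lower triangular change of basis of the Vandermonde matrix. -/
noncomputable def newtonMatrix {N : ℕ} (u : Fin N → R) : Matrix (Fin N) (Fin N) R :=
  of fun i m => (Lagrange.nodal (Finset.Iio m) u).eval (u i)

lemma det_newtonMatrix [Nontrivial R] {N : ℕ} (u : Fin N → R) :
    (newtonMatrix u).det = (vandermonde u).det :=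
  (det_eval_matrixOfPolynomials_eq_det_vandermonde u _ (fun m => by simp)
    fun _ => Lagrange.nodal_monic).symm

lemma newtonMatrix_apply_zero (u : Fin (n + 1) → R) (i : Fin (n + 1)) :
    newtonMatrix u i 0 = 1 := by
  have hIio : Finset.Iio (0 : Fin (n + 1)) = ∅ := by ext j; simp
  rw [newtonMatrix, of_apply, hIio, Lagrange.nodal_empty, eval_one]

lemma newtonMatrix_apply_succ (u : Fin (n + 1) → R) (i : Fin (n + 1)) (m : Fin n) :
    newtonMatrix u i m.succ = (u i - u m.castSucc) * newtonMatrix u i m.castSucc := by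
  have hIio : Finset.Iio m.succ = insert m.castSucc (Finset.Iio m.castSucc) := by
    ext j
    rw [Finset.Iio_insert, Finset.mem_Iio, Finset.mem_Iic, Fin.le_castSucc_iff]
  rw [newtonMatrix, of_apply, of_apply, Lagrange.eval_nodal, Lagrange.eval_nodal, hIio,
    Finset.prod_insert Finset.notMem_Iio_self]

lemma sub_mul_newtonMatrix_apply_last (u : Fin (n + 1) → R) (i : Fin (n + 1)) :
    (u i - u (Fin.last n)) * newtonMatrix u i (Fin.last n) = 0 := by
  rcases (Fin.le_last i).eq_or_lt with rfl | hi
  · simp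
  · rw [newtonMatrix, of_apply, Lagrange.eval_nodal_at_node (Finset.mem_Iio.2 hi), mul_zero]

/-- `newtonCoeff u k m` is the `m`-th coefficient of `X ^ k` in the Newton basis at the nodes `u`,
modulo the nodal polynomial `∏ i, (X - u i)`; equivalently, the complete homogeneous symmetric
polynomial of degree `k - m` in `u 0, …, u m`. The recursion is multiplication by `X`, which sends
the `m`-th Newton polynomial to `u m` times itself plus the next one. -/
def newtonCoeff (u : Fin (n + 1) → R) : ℕ → Fin (n + 1) → R
  | 0 => Pi.single 0 1
  | k + 1 => u * newtonCoeff u k + Fin.cons 0 (Fin.init (newtonCoeff u k))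

lemma newtonCoeff_succ_zero (u : Fin (n + 1) → R) (k : ℕ) :
    newtonCoeff u (k + 1) 0 = u 0 * newtonCoeff u k 0 := by
  simp [newtonCoeff]

lemma newtonCoeff_succ_succ (u : Fin (n + 1) → R) (k : ℕ) (m : Fin n) :
    newtonCoeff u (k + 1) m.succ =
      u m.succ * newtonCoeff u k m.succ + newtonCoeff u k m.castSucc := by
  simp [newtonCoeff, Fin.init]

lemma newtonMatrix_mulVec_newtonCoeff (u : Fin (n + 1) → R) (k : ℕ) :
    newtonMatrix u *ᵥ newtonCoeff u k = u ^ k := by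
  ext i
  induction k with
  | zero => simp [newtonCoeff, newtonMatrix_apply_zero]
  | succ k ih =>
    have hshift : ∑ m, (u i - u m) * newtonMatrix u i m * newtonCoeff u k m =
        ∑ m : Fin n, newtonMatrix u i m.succ * newtonCoeff u k m.castSucc := by
      rw [Fin.sum_univ_castSucc, sub_mul_newtonMatrix_apply_last, zero_mul, add_zero]
      simp only [newtonMatrix_apply_succ]
    calc (newtonMatrix u *ᵥ newtonCoeff u (k + 1)) i
        = ∑ m, newtonMatrix u i m * (u m * newtonCoeff u k m) +
            ∑ m : Fin n, newtonMatrix u i m.succ * newtonCoeff u k m.castSucc := by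
          rw [mulVec, dotProduct, Fin.sum_univ_succ, Fin.sum_univ_succ]
          simp only [newtonCoeff_succ_zero, newtonCoeff_succ_succ, mul_add,
            Finset.sum_add_distrib, add_assoc]
      _ = u i * (newtonMatrix u *ᵥ newtonCoeff u k) i := by
          rw [← hshift, ← Finset.sum_add_distrib, mulVec, dotProduct, Finset.mul_sum]
          exact Finset.sum_congr rfl fun m _ => by ring
      _ = (u ^ (k + 1)) i := by rw [ih, Pi.pow_apply, Pi.pow_apply, pow_succ']

lemma newtonCoeff_zero_left (k : ℕ) (m : Fin (n + 1)) :
    newtonCoeff (0 : Fin (n + 1) → R) k m = if (m : ℕ) = k then 1 else 0 := by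
  induction k generalizing m with
  | zero => simp [newtonCoeff, Pi.single_apply]
  | succ k ih =>
    cases m using Fin.cases with
    | zero => simp [newtonCoeff_succ_zero]
    | succ m => simp [newtonCoeff_succ_succ, ih]

lemma continuous_newtonCoeff [TopologicalSpace R] [IsTopologicalRing R] (k : ℕ)
    (m : Fin (n + 1)) : Continuous fun u : Fin (n + 1) → R => newtonCoeff u k m := by
  induction k generalizing m with
  | zero => exact continuous_const
  | succ k ih =>
    cases m using Fin.cases with
    | zero =>
      simp only [newtonCoeff_succ_zero]
      fun_prop
    | succ m =>
      simp only [newtonCoeff_succ_succ]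
      fun_prop

end NewtonInterpolation

lemma eventually_norm_fst_le_and_norm_snd_le {E F : Type*} [SeminormedAddCommGroup E]
    [SeminormedAddCommGroup F] {ρ : ℝ} (hρ : 0 < ρ) :
    ∀ᶠ p : E × F in 𝓝 (0, 0), ‖p.1‖ ≤ ρ ∧ ‖p.2‖ ≤ ρ := by
  filter_upwards [Metric.closedBall_mem_nhds (0, 0) hρ] with p hp
  rwa [mem_closedBall_iff_norm, Prod.mk_zero_zero, sub_zero, Prod.norm_def, sup_le_iff] at hp

section CollapsingNodes

variable {𝕜 : Type*} [NormedField 𝕜] {n : ℕ} {c : ℕ → 𝕜} {ρ : ℝ} {u v : Fin (n + 1) → 𝕜}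

lemma norm_newtonCoeff_mul_pow_le (hu : ‖u‖ ≤ ρ) (k : ℕ) (m : Fin (n + 1)) :
    ‖newtonCoeff u k m‖ * ρ ^ (m : ℕ) ≤ (2 * ρ) ^ k := by
  have hρ : 0 ≤ ρ := (norm_nonneg u).trans hu
  induction k generalizing m with
  | zero =>
    cases m using Fin.cases with
    | zero => simp [newtonCoeff]
    | succ m => simp [newtonCoeff]
  | succ k ih =>
    have hdiag (m : Fin (n + 1)) :
        ‖u m * newtonCoeff u k m‖ * ρ ^ (m : ℕ) ≤ ρ * (2 * ρ) ^ k := by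
      rw [norm_mul, mul_assoc]
      exact mul_le_mul ((norm_le_pi_norm u m).trans hu) (ih m) (by positivity) hρ
    cases m using Fin.cases with
    | zero =>
      calc ‖newtonCoeff u (k + 1) 0‖ * ρ ^ ((0 : Fin (n + 1)) : ℕ) ≤ ρ * (2 * ρ) ^ k := by
            rw [newtonCoeff_succ_zero]; exact hdiag 0
        _ ≤ 2 * (ρ * (2 * ρ) ^ k) := le_mul_of_one_le_left (by positivity) one_le_two
        _ = (2 * ρ) ^ (k + 1) := by ring
    | succ m =>
      calc ‖newtonCoeff u (k + 1) m.succ‖ * ρ ^ (m.succ : ℕ)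
          ≤ (‖u m.succ * newtonCoeff u k m.succ‖ + ‖newtonCoeff u k m.castSucc‖) *
              ρ ^ (m.succ : ℕ) := by
            rw [newtonCoeff_succ_succ]; gcongr; exact norm_add_le _ _
        _ = ‖u m.succ * newtonCoeff u k m.succ‖ * ρ ^ (m.succ : ℕ) +
              ρ * (‖newtonCoeff u k m.castSucc‖ * ρ ^ (m.castSucc : ℕ)) := by
            rw [Fin.val_succ, Fin.val_castSucc]; ring
        _ ≤ ρ * (2 * ρ) ^ k + ρ * (2 * ρ) ^ k :=
            add_le_add (hdiag m.succ) (mul_le_mul_of_nonneg_left (ih m.castSucc) hρ)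
        _ = (2 * ρ) ^ (k + 1) := by ring

lemma norm_mul_newtonCoeff_mul_newtonCoeff_le (hρ : 0 < ρ) (hu : ‖u‖ ≤ ρ) (hv : ‖v‖ ≤ ρ)
    (k : ℕ) (l m : Fin (n + 1)) :
    ‖c k * newtonCoeff u k l * newtonCoeff v k m‖ ≤
      ‖c k‖ * ((2 * ρ) ^ 2) ^ k / (ρ ^ (l : ℕ) * ρ ^ (m : ℕ)) := by
  rw [le_div_iff₀ (by positivity), norm_mul, norm_mul]
  calc ‖c k‖ * ‖newtonCoeff u k l‖ * ‖newtonCoeff v k m‖ * (ρ ^ (l : ℕ) * ρ ^ (m : ℕ))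
      = ‖c k‖ * ((‖newtonCoeff u k l‖ * ρ ^ (l : ℕ)) * (‖newtonCoeff v k m‖ * ρ ^ (m : ℕ))) := by
        ring
    _ ≤ ‖c k‖ * ((2 * ρ) ^ k * (2 * ρ) ^ k) := by
        gcongr
        exacts [norm_newtonCoeff_mul_pow_le hu k l, norm_newtonCoeff_mul_pow_le hv k m]
    _ = ‖c k‖ * ((2 * ρ) ^ 2) ^ k := by rw [pow_right_comm, sq]

/-- The coefficients of the kernel `∑ k, c k * (x * y) ^ k` with respect to the Newton bases at the
nodes `u` in `x` and `v` in `y`. -/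
noncomputable def newtonKernelCoeff (c : ℕ → 𝕜) (u v : Fin (n + 1) → 𝕜) :
    Matrix (Fin (n + 1)) (Fin (n + 1)) 𝕜 :=
  of fun l m => ∑' k, c k * newtonCoeff u k l * newtonCoeff v k m

lemma newtonKernelCoeff_zero :
    newtonKernelCoeff c (0 : Fin (n + 1) → 𝕜) 0 = diagonal fun k : Fin (n + 1) => c k := by
  ext l m
  rw [newtonKernelCoeff, of_apply, tsum_eq_single (l : ℕ)]
  · simp [newtonCoeff_zero_left, diagonal_apply, Fin.ext_iff, eq_comm]
  · intro k hk
    simp [newtonCoeff_zero_left, hk.symm]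

variable [CompleteSpace 𝕜]

lemma of_tsum_mul_pow_eq_newtonMatrix_mul (hρ : 0 < ρ)
    (hc : Summable fun k => ‖c k‖ * ((2 * ρ) ^ 2) ^ k) (hu : ‖u‖ ≤ ρ) (hv : ‖v‖ ≤ ρ) :
    (of fun i j => ∑' k, c k * (u i * v j) ^ k) =
      newtonMatrix u * newtonKernelCoeff c u v * (newtonMatrix v)ᵀ := by
  ext i j
  have hsum (l m : Fin (n + 1)) : HasSum (fun k => c k * newtonCoeff u k l * newtonCoeff v k m)
      (newtonKernelCoeff c u v l m) :=
    (Summable.of_norm_bounded (hc.div_const _)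
      fun k => norm_mul_newtonCoeff_mul_newtonCoeff_le hρ hu hv k l m).hasSum
  have hprod := hasSum_sum (s := Finset.univ) fun m _ =>
    (hasSum_sum (s := Finset.univ) fun l _ =>
      (hsum l m).mul_left (newtonMatrix u i l)).mul_right (newtonMatrix v j m)
  simp only [mul_apply, of_apply, transpose_apply]
  rw [← hprod.tsum_eq]
  refine tsum_congr fun k => ?_
  have hexpand (w : Fin (n + 1) → 𝕜) (i : Fin (n + 1)) :
      w i ^ k = ∑ m, newtonMatrix w i m * newtonCoeff w k m :=
    (congrFun (newtonMatrix_mulVec_newtonCoeff w k) i).symm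
  rw [mul_pow, hexpand u, hexpand v, Finset.sum_mul_sum, Finset.sum_comm, Finset.mul_sum]
  simp only [Finset.mul_sum, Finset.sum_mul]
  exact Finset.sum_congr rfl fun m _ => Finset.sum_congr rfl fun l _ => by ring

lemma tendsto_newtonKernelCoeff (hρ : 0 < ρ)
    (hc : Summable fun k => ‖c k‖ * ((2 * ρ) ^ 2) ^ k) :
    Tendsto (fun p : (Fin (n + 1) → 𝕜) × (Fin (n + 1) → 𝕜) => newtonKernelCoeff c p.1 p.2)
      (𝓝 (0, 0)) (𝓝 (diagonal fun k : Fin (n + 1) => c k)) := by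
  rw [← newtonKernelCoeff_zero]
  refine tendsto_pi_nhds.2 fun l => tendsto_pi_nhds.2 fun m => ?_
  refine tendsto_tsum_of_dominated_convergence (hc.div_const (ρ ^ (l : ℕ) * ρ ^ (m : ℕ)))
    (fun k => ?_) ?_
  · have hcont : Continuous fun p : (Fin (n + 1) → 𝕜) × (Fin (n + 1) → 𝕜) =>
        c k * newtonCoeff p.1 k l * newtonCoeff p.2 k m :=
      (((continuous_newtonCoeff k l).comp continuous_fst).const_mul (c k)).mul
        ((continuous_newtonCoeff k m).comp continuous_snd)
    exact hcont.tendsto (0, 0)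
  · filter_upwards [eventually_norm_fst_le_and_norm_snd_le hρ] with p ⟨hu, hv⟩ k
    exact norm_mul_newtonCoeff_mul_newtonCoeff_le hρ hu hv k l m

theorem tendsto_det_tsum_mul_pow_div_det_vandermonde {N : ℕ} {r : ℝ} (hr : 0 < r)
    (hc : Summable fun k => ‖c k‖ * r ^ k) :
    Tendsto (fun p : (Fin N → 𝕜) × (Fin N → 𝕜) =>
        (of fun i j => ∑' k, c k * (p.1 i * p.2 j) ^ k).det /
          ((vandermonde p.1).det * (vandermonde p.2).det))
      (𝓝[{p | Function.Injective p.1 ∧ Function.Injective p.2}] (0, 0))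
      (𝓝 (∏ k : Fin N, c k)) := by
  obtain _ | n := N
  · simpa using tendsto_const_nhds
  obtain ⟨ρ, hρ, rfl⟩ : ∃ ρ : ℝ, 0 < ρ ∧ (2 * ρ) ^ 2 = r :=
    ⟨√r / 2, by positivity, by rw [mul_div_cancel₀ _ two_ne_zero, Real.sq_sqrt hr.le]⟩
  have hdet := (Continuous.matrix_det continuous_id).continuousAt.tendsto.comp
    (tendsto_newtonKernelCoeff (n := n) hρ hc)
  rw [id, det_diagonal] at hdet
  refine (hdet.mono_left nhdsWithin_le_nhds).congr' ?_
  filter_upwards [self_mem_nhdsWithin,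
    nhdsWithin_le_nhds (eventually_norm_fst_le_and_norm_snd_le hρ)] with p ⟨hu, hv⟩ ⟨hu', hv'⟩
  rw [of_tsum_mul_pow_eq_newtonMatrix_mul hρ hc hu' hv', det_mul, det_mul, det_transpose,
    det_newtonMatrix, det_newtonMatrix, mul_right_comm, mul_div_cancel_left₀]
  · rfl
  · exact mul_ne_zero (det_vandermonde_ne_zero_iff.2 hu) (det_vandermonde_ne_zero_iff.2 hv)

end CollapsingNodes

section Bessel

variable {α : ℝ}

lemma vandermondeProd_eq_det_vandermonde {N : ℕ} (x : Fin N → ℝ) :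
    vandermondeProd x = (vandermonde x).det := by
  rw [det_vandermonde, vandermondeProd, Finset.prod_filter, ← Finset.univ_product_univ,
    Finset.prod_product]
  refine Finset.prod_congr rfl fun i _ => ?_
  rw [← Finset.prod_filter, Finset.filter_lt_eq_Ioi]

/-- The Taylor coefficients of the entire function `f` with `I_α x = (x / 2) ^ α * f (x ^ 2)`. -/
noncomputable def besselCoeff (α : ℝ) (k : ℕ) : ℝ :=
  (1 / 4) ^ k / (k.factorial * Real.Gamma (k + α + 1))

lemma besselCoeff_ne_zero (hα : ∀ m : ℕ, α + 1 ≠ -m) (k : ℕ) : besselCoeff α k ≠ 0 := by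
  have hΓ : Real.Gamma (k + α + 1) ≠ 0 := Real.Gamma_ne_zero fun m h =>
    hα (m + k) (by push_cast; linarith)
  unfold besselCoeff
  positivity

lemma besselCoeff_succ_div (hα : ∀ m : ℕ, α + 1 ≠ -m) (k : ℕ) :
    besselCoeff α (k + 1) / besselCoeff α k = ((4 * (k + 1)) * (k + (α + 1)))⁻¹ := by
  have hk : k + α + 1 ≠ 0 := fun h => hα k (by linarith)
  have hΓ : Real.Gamma ((k + 1 : ℕ) + α + 1) = (k + α + 1) * Real.Gamma (k + α + 1) := by
    rw [← Real.Gamma_add_one hk]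
    push_cast
    ring_nf
  have hcoeff : besselCoeff α (k + 1) = besselCoeff α k * ((4 * (k + 1)) * (k + (α + 1)))⁻¹ := by
    rw [besselCoeff, besselCoeff, hΓ, Nat.factorial_succ, ← add_assoc, pow_succ]
    push_cast
    simp only [div_eq_mul_inv, mul_inv]
    ring
  rw [hcoeff, mul_div_cancel_left₀ _ (besselCoeff_ne_zero hα k)]

lemma summable_besselCoeff (hα : ∀ m : ℕ, α + 1 ≠ -m) : Summable (besselCoeff α) := by
  refine summable_of_ratio_test_tendsto_lt_one zero_lt_one
    (Eventually.of_forall (besselCoeff_ne_zero hα)) ?_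
  simp only [← norm_div, besselCoeff_succ_div hα]
  refine tendsto_zero_iff_norm_tendsto_zero.1 (tendsto_inv_atTop_zero.comp ?_)
  have hshift (a : ℝ) : Tendsto (fun k : ℕ => (k : ℝ) + a) atTop atTop :=
    tendsto_atTop_add_const_right _ a tendsto_natCast_atTop_atTop
  exact ((hshift 1).const_mul_atTop four_pos).atTop_mul_atTop₀ (hshift (α + 1))

lemma besselI_eq_rpow_mul_tsum (α : ℝ) {x : ℝ} (hx : 0 < x) :
    besselI α x = (x / 2) ^ α * ∑' k, besselCoeff α k * (x ^ 2) ^ k := by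
  rw [besselI, ← tsum_mul_left]
  refine tsum_congr fun k => ?_
  have hpow : (x / 2) ^ (2 * (k : ℝ) + α) = (x / 2) ^ α * ((1 / 4) ^ k * (x ^ 2) ^ k) := by
    rw [Real.rpow_add (by positivity), Real.rpow_mul (by positivity), Real.rpow_natCast,
      Real.rpow_two, ← mul_pow, mul_comm]
    ring_nf
  rw [hpow, besselCoeff]
  ring

lemma bessel_kernel_eq_mul_tsum (α : ℝ) {x y : ℝ} (hx : 0 < x) (hy : 0 < y) :
    y ^ (α + 1) / x ^ α * Real.exp (-(x ^ 2 + y ^ 2) / 2) * besselI α (x * y) =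
      Real.exp (-x ^ 2 / 2) * (2 ^ (-α) * y ^ (2 * α + 1) * Real.exp (-y ^ 2 / 2) *
        ∑' k, besselCoeff α k * (x ^ 2 * y ^ 2) ^ k) := by
  have hexp : Real.exp (-(x ^ 2 + y ^ 2) / 2) = Real.exp (-x ^ 2 / 2) * Real.exp (-y ^ 2 / 2) := by
    rw [← Real.exp_add]; ring_nf
  have hy_pow : y ^ (2 * α + 1) = y ^ (α + 1) * y ^ α := by rw [← Real.rpow_add hy]; ring_nf
  have hxy_pow : (x * y / 2) ^ α = x ^ α * y ^ α * 2 ^ (-α) := by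
    rw [Real.div_rpow (by positivity) zero_le_two, Real.mul_rpow hx.le hy.le,
      Real.rpow_neg zero_le_two, div_eq_mul_inv]
  have hx_pow : x ^ α ≠ 0 := (Real.rpow_pos_of_pos hx α).ne'
  rw [besselI_eq_rpow_mul_tsum α (mul_pos hx hy), hexp, hy_pow, hxy_pow, mul_pow]
  field_simp

lemma det_bessel_kernel_eq_mul_det_tsum (α : ℝ) {N : ℕ} {x y : Fin N → ℝ} (hx : ∀ i, 0 < x i)
    (hy : ∀ i, 0 < y i) :
    (of fun i j => y j ^ (α + 1) / x i ^ α * Real.exp (-(x i ^ 2 + y j ^ 2) / 2) *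
        besselI α (x i * y j)).det =
      (2 ^ (-α)) ^ N * ((∏ i, Real.exp (-x i ^ 2 / 2)) * ∏ j, Real.exp (-y j ^ 2 / 2)) *
        ((∏ j, y j ^ (2 * α + 1)) *
          (of fun i j => ∑' k, besselCoeff α k * (x i ^ 2 * y j ^ 2) ^ k).det) := by
  simp only [bessel_kernel_eq_mul_tsum α (hx _) (hy _)]
  have hrow := det_mul_row (fun j => 2 ^ (-α) * y j ^ (2 * α + 1) * Real.exp (-y j ^ 2 / 2))
    (of fun i j => ∑' k, besselCoeff α k * (x i ^ 2 * y j ^ 2) ^ k)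
  have hcolumn := det_mul_column (fun i => Real.exp (-x i ^ 2 / 2))
    (of fun i j => 2 ^ (-α) * y j ^ (2 * α + 1) * Real.exp (-y j ^ 2 / 2) *
      ∑' k, besselCoeff α k * (x i ^ 2 * y j ^ 2) ^ k)
  simp only [of_apply] at hrow hcolumn
  rw [hcolumn, hrow, Finset.prod_mul_distrib, Finset.prod_mul_distrib, Finset.prod_const,
    Finset.card_univ, Fintype.card_fin]
  ring

lemma two_rpow_neg_eq_mul_prod (α : ℝ) (N : ℕ) :
    (2 : ℝ) ^ (-(N * (N - 1 + α))) = (2 ^ (-α)) ^ N * ∏ k : Fin N, (1 / 4 : ℝ) ^ (k : ℕ) := by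
  rw [← Finset.prod_range fun k => (1 / 4 : ℝ) ^ k]
  induction N with
  | zero => simp
  | succ N ih =>
    have hexponent : -(((N + 1 : ℕ) : ℝ) * ((N + 1 : ℕ) - 1 + α)) =
        -(N * (N - 1 + α)) + -α + -2 * N := by push_cast; ring
    have hquarter : (2 : ℝ) ^ (-2 : ℝ) = 1 / 4 := by
      rw [Real.rpow_neg zero_le_two, Real.rpow_two]; norm_num
    rw [hexponent, Real.rpow_add two_pos, Real.rpow_add two_pos, ih, Finset.prod_range_succ,
      Real.rpow_mul zero_le_two, Real.rpow_natCast, hquarter]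
    ring

lemma two_rpow_div_prod_Gamma_eq_mul_prod_besselCoeff (α : ℝ) (N : ℕ) :
    (2 : ℝ) ^ (-((N : ℝ) * (N - 1 + α))) /
        ∏ k : Fin N, (Real.Gamma ((k : ℕ) + 1) * Real.Gamma (α + (k : ℕ) + 1)) =
      (2 ^ (-α)) ^ N * ∏ k : Fin N, besselCoeff α k := by
  simp only [two_rpow_neg_eq_mul_prod, mul_div_assoc, ← Finset.prod_div_distrib, besselCoeff,
    Real.Gamma_nat_eq_factorial, add_comm α]

lemma tendsto_prod_exp_neg_sq_div_two (N : ℕ) :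
    Tendsto (fun p : (Fin N → ℝ) × (Fin N → ℝ) =>
        (∏ i, Real.exp (-p.1 i ^ 2 / 2)) * ∏ j, Real.exp (-p.2 j ^ 2 / 2))
      (𝓝 (0, 0)) (𝓝 1) := by
  have hcont : Continuous fun p : (Fin N → ℝ) × (Fin N → ℝ) =>
      (∏ i, Real.exp (-p.1 i ^ 2 / 2)) * ∏ j, Real.exp (-p.2 j ^ 2 / 2) := by fun_prop
  simpa using hcont.tendsto (0, 0)

lemma injective_sq_of_pos {ι : Type*} {x : ι → ℝ} (hx : Function.Injective x)
    (hpos : ∀ i, 0 < x i) : Function.Injective fun i => x i ^ 2 := fun i j hij =>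
  hx ((pow_left_inj₀ (hpos i).le (hpos j).le two_ne_zero).1 hij)

lemma tendsto_sq_nhdsWithin_injective (N : ℕ) :
    Tendsto (fun p : (Fin N → ℝ) × (Fin N → ℝ) => (fun i => p.1 i ^ 2, fun i => p.2 i ^ 2))
      (𝓝[{p | (Function.Injective p.1 ∧ ∀ i, 0 < p.1 i) ∧
        (Function.Injective p.2 ∧ ∀ i, 0 < p.2 i)}] (0, 0))
      (𝓝[{p | Function.Injective p.1 ∧ Function.Injective p.2}] (0, 0)) := by
  refine tendsto_nhdsWithin_iff.2 ⟨?_, ?_⟩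
  · have hcont : Continuous fun p : (Fin N → ℝ) × (Fin N → ℝ) =>
        ((fun i => p.1 i ^ 2, fun i => p.2 i ^ 2) : (Fin N → ℝ) × (Fin N → ℝ)) := by fun_prop
    refine (hcont.tendsto' _ _ ?_).mono_left nhdsWithin_le_nhds
    ext <;> simp
  · filter_upwards [self_mem_nhdsWithin] with p ⟨⟨hx, hx_pos⟩, hy, hy_pos⟩
    exact ⟨injective_sq_of_pos hx hx_pos, injective_sq_of_pos hy hy_pos⟩

end Bessel

theorem stmt_7_general (α : ℝ) (hα : ∀ m : ℕ, α + 1 ≠ -m) (N : ℕ) :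
    Filter.Tendsto
      (fun p : (Fin N → ℝ) × (Fin N → ℝ) =>
        (Matrix.of fun i j : Fin N =>
          ((p.2 j) ^ (α + 1) / (p.1 i) ^ α) *
            Real.exp (-((p.1 i) ^ 2 + (p.2 j) ^ 2) / 2) * besselI α (p.1 i * p.2 j)).det /
          ((∏ k : Fin N, (p.2 k) ^ (2 * α + 1)) *
            vandermondeProd (fun k : Fin N => (p.1 k) ^ 2) *
            vandermondeProd (fun k : Fin N => (p.2 k) ^ 2)))
      (nhdsWithin (0, 0)
        {p : (Fin N → ℝ) × (Fin N → ℝ) |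
          (Function.Injective p.1 ∧ ∀ i, 0 < p.1 i) ∧
            (Function.Injective p.2 ∧ ∀ i, 0 < p.2 i)})
      (nhds ((2 : ℝ) ^ (-((N : ℝ) * ((N : ℝ) - 1 + α))) /
        ∏ k : Fin N, (Real.Gamma ((k : ℕ) + 1) * Real.Gamma (α + (k : ℕ) + 1)))) := by
  rw [two_rpow_div_prod_Gamma_eq_mul_prod_besselCoeff]
  have hsummable : Summable fun k => ‖besselCoeff α k‖ * 1 ^ k := by
    simpa only [one_pow, mul_one] using (summable_besselCoeff hα).norm
  have hdet := (tendsto_det_tsum_mul_pow_div_det_vandermonde one_pos hsummable).comp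
    (tendsto_sq_nhdsWithin_injective N)
  have hexp := (tendsto_prod_exp_neg_sq_div_two N).const_mul (((2 : ℝ) ^ (-α)) ^ N)
  rw [mul_one] at hexp
  refine ((hexp.mono_left nhdsWithin_le_nhds).mul hdet).congr' ?_
  filter_upwards [self_mem_nhdsWithin] with p ⟨⟨_, hx⟩, _, hy⟩
  have hy_prod : ∏ k, p.2 k ^ (2 * α + 1) ≠ 0 :=
    Finset.prod_ne_zero_iff.2 fun k _ => (Real.rpow_pos_of_pos (hy k) _).ne'
  rw [det_bessel_kernel_eq_mul_det_tsum α hx hy, vandermondeProd_eq_det_vandermonde,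
    vandermondeProd_eq_det_vandermonde, mul_assoc (∏ k, p.2 k ^ (2 * α + 1)), mul_div_assoc,
    mul_div_mul_left _ _ hy_prod, Function.comp_apply]

theorem stmt_7 (α : ℝ) (hα : -1 < α) (N : ℕ) (hN : 1 ≤ N) :
    Filter.Tendsto
      (fun p : (Fin N → ℝ) × (Fin N → ℝ) =>
        (Matrix.of fun i j : Fin N =>
          ((p.2 j) ^ (α + 1) / (p.1 i) ^ α) *
            Real.exp (-((p.1 i) ^ 2 + (p.2 j) ^ 2) / 2) * besselI α (p.1 i * p.2 j)).det /
          ((∏ k : Fin N, (p.2 k) ^ (2 * α + 1)) *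
            vandermondeProd (fun k : Fin N => (p.1 k) ^ 2) *
            vandermondeProd (fun k : Fin N => (p.2 k) ^ 2)))
      (nhdsWithin (0, 0)
        {p : (Fin N → ℝ) × (Fin N → ℝ) |
          (Function.Injective p.1 ∧ ∀ i, 0 < p.1 i) ∧
            (Function.Injective p.2 ∧ ∀ i, 0 < p.2 i)})
      (nhds ((2 : ℝ) ^ (-((N : ℝ) * ((N : ℝ) - 1 + α))) /
        ∏ k : Fin N, (Real.Gamma ((k : ℕ) + 1) * Real.Gamma (α + (k : ℕ) + 1)))) :=
  stmt_7_general α (fun m => (by linarith [m.cast_nonneg (α := ℝ)] : -(m : ℝ) < α + 1).ne') N
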